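/- arXiv:math/0309415 — 2 statements merged into one kernel-verified Lean document; each statement's English description precedes it below -/
import Mathlib

section
/- (Exchange of first and second arguments.) Let Φ = (w₁,w₂) : Ω → Ω' be a biholomorphism between open subsets of ℂ² with inverse Ψ = (x,y) : Ω' → Ω, let D := ∂ₓw₁·∂ᵧw₂ − ∂ₓw₂·∂ᵧw₁ be the Jacobian of Φ, and suppose J(w₁,w₂) ≠ 0 on Ω (in the variables (x,y)) and J(x,y) ≠ 0 on Ω' (in the variables (w₁,w₂)). Then at every point of Ω the column vector ({w₁,w₂;x,y}ₓ, {w₁,w₂;x,y}ᵧ, [w₁,w₂;x,y]ₓ, [w₁,w₂;x,y]ᵧ)ᵀ equals −(1/D)·M(w₁,w₂;x,y) applied to the column vector ({x,y;w₁,w₂}_{w₁}, {x,y;w₁,w₂}_{w₂}, [x,y;w₁,w₂]_{w₁}, [x,y;w₁,w₂]_{w₂})ᵀ of the four GL(3) derivatives of the inverse map, evaluated at Φ(x,y). -/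
open Complex Matrix

noncomputable section

/-- Partial derivative in the first complex variable. -/
def pdx (f : ℂ × ℂ → ℂ) (p : ℂ × ℂ) : ℂ := deriv (fun x => f (x, p.2)) p.1

/-- Partial derivative in the second complex variable. -/
def pdy (f : ℂ × ℂ → ℂ) (p : ℂ × ℂ) : ℂ := deriv (fun y => f (p.1, y)) p.2

/-- The Jacobian `J(u₁,u₂) = ∂ₓu₁·∂ᵧu₂ − ∂ₓu₂·∂ᵧu₁`. -/
def Jac (u₁ u₂ : ℂ × ℂ → ℂ) (p : ℂ × ℂ) : ℂ :=
  pdx u₁ p * pdy u₂ p - pdx u₂ p * pdy u₁ p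

/-- The GL(3) derivative `{u₁,u₂;x,y}ₓ`. -/
def brX (u₁ u₂ : ℂ × ℂ → ℂ) (p : ℂ × ℂ) : ℂ :=
  (pdx u₁ p * pdx (pdx u₂) p - pdx u₂ p * pdx (pdx u₁) p) / Jac u₁ u₂ p

/-- The GL(3) derivative `{u₁,u₂;x,y}ᵧ`. -/
def brY (u₁ u₂ : ℂ × ℂ → ℂ) (p : ℂ × ℂ) : ℂ :=
  -(pdy u₁ p * pdy (pdy u₂) p - pdy u₂ p * pdy (pdy u₁) p) / Jac u₁ u₂ p

/-- The GL(3) derivative `[u₁,u₂;x,y]ₓ`. -/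
def sqX (u₁ u₂ : ℂ × ℂ → ℂ) (p : ℂ × ℂ) : ℂ :=
  ((pdy u₁ p * pdx (pdx u₂) p - pdy u₂ p * pdx (pdx u₁) p)
      + 2 * (pdx u₁ p * pdx (pdy u₂) p - pdx u₂ p * pdx (pdy u₁) p)) / Jac u₁ u₂ p

/-- The GL(3) derivative `[u₁,u₂;x,y]ᵧ`. -/
def sqY (u₁ u₂ : ℂ × ℂ → ℂ) (p : ℂ × ℂ) : ℂ :=
  -((pdx u₁ p * pdy (pdy u₂) p - pdx u₂ p * pdy (pdy u₁) p)
      + 2 * (pdy u₁ p * pdx (pdy u₂) p - pdy u₂ p * pdx (pdy u₁) p)) / Jac u₁ u₂ p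

/-- The 4×4 matrix `M(w₁,w₂;x,y)` built from the first partial derivatives of
the holomorphic map `(w₁,w₂)`. -/
def Mmat (w₁ w₂ : ℂ × ℂ → ℂ) (p : ℂ × ℂ) : Matrix (Fin 4) (Fin 4) ℂ :=
  !![(pdx w₁ p) ^ 3, -(pdx w₂ p) ^ 3, (pdx w₁ p) ^ 2 * pdx w₂ p,
        -(pdx w₁ p) * (pdx w₂ p) ^ 2;
     -(pdy w₁ p) ^ 3, (pdy w₂ p) ^ 3, -(pdy w₁ p) ^ 2 * pdy w₂ p,
        (pdy w₁ p) * (pdy w₂ p) ^ 2;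
     3 * (pdx w₁ p) ^ 2 * pdy w₁ p, -3 * (pdx w₂ p) ^ 2 * pdy w₂ p,
        (pdx w₁ p) ^ 2 * pdy w₂ p + 2 * pdx w₁ p * pdx w₂ p * pdy w₁ p,
        -(pdx w₂ p) ^ 2 * pdy w₁ p - 2 * pdx w₁ p * pdx w₂ p * pdy w₂ p;
     -3 * pdx w₁ p * (pdy w₁ p) ^ 2, 3 * pdx w₂ p * (pdy w₂ p) ^ 2,
        -(pdx w₂ p) * (pdy w₁ p) ^ 2 - 2 * pdx w₁ p * pdy w₁ p * pdy w₂ p,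
        (pdx w₁ p) * (pdy w₂ p) ^ 2 + 2 * pdx w₂ p * pdy w₁ p * pdy w₂ p]

/-- The column vector of the four GL(3) derivatives of the pair `(u₁,u₂)`. -/
def Vvec (u₁ u₂ : ℂ × ℂ → ℂ) (p : ℂ × ℂ) : Fin 4 → ℂ :=
  ![brX u₁ u₂ p, brY u₁ u₂ p, sqX u₁ u₂ p, sqY u₁ u₂ p]

open Metric Set Filter Topology in
/-- A directional derivative of a holomorphic function on a finite-dimensional complex space is
holomorphic. -/
theorem differentiableOn_fderiv_apply_const {E : Type*} [NormedAddCommGroup E]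
    [NormedSpace ℂ E] [FiniteDimensional ℂ E] {U : Set E} {f : E → ℂ}
    (hf : DifferentiableOn ℂ f U) (hU : IsOpen U) (v : E) :
    DifferentiableOn ℂ (fun p => fderiv ℂ f p v) U := by
  intro p₀ hp₀
  apply DifferentiableAt.differentiableWithinAt
  borelize E
  have : ProperSpace E := FiniteDimensional.proper ℂ E
  have : ProperSpace (E →L[ℂ] ℂ) := FiniteDimensional.proper ℂ _
  have hdiff : ∀ p ∈ U, DifferentiableAt ℂ f p := fun p hp => hf.differentiableAt (hU.mem_nhds hp)
  obtain ⟨ε, hε, hball⟩ : ∃ ε > 0, ball p₀ (3 * ε) ⊆ U ∩ f ⁻¹' ball (f p₀) 1 := by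
    obtain ⟨δ, hδ, h⟩ := Metric.mem_nhds_iff.1 (inter_mem (hU.mem_nhds hp₀)
      ((hdiff p₀ hp₀).continuousAt.preimage_mem_nhds (ball_mem_nhds (f p₀) one_pos)))
    exact ⟨δ / 3, by positivity, by rwa [mul_div_cancel₀ δ (by norm_num)]⟩
  have hbound : ∀ p ∈ ball p₀ (2 * ε), ‖fderiv ℂ f p‖ ≤ 2 / ε := by
    intro p hp
    have hsub : ball p ε ⊆ ball p₀ (3 * ε) :=
      ball_subset_ball' (by rw [mem_ball] at hp; linarith)
    refine Complex.norm_fderiv_le_div_of_mapsTo_ball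
      (hf.mono fun z hz => (hball (hsub hz)).1) (fun z hz => ?_) hε
    have h₁ : dist (f z) (f p₀) < 1 := (hball (hsub hz)).2
    have h₂ : dist (f p) (f p₀) < 1 := (hball (hsub (mem_ball_self hε))).2
    rw [mem_closedBall]
    linarith [dist_triangle_right (f z) (f p) (f p₀)]
  set r : ℝ := ε / (‖v‖ + 1) with hr_def
  have hr : 0 < r := by positivity
  have hrv : r * ‖v‖ < ε := by
    rw [hr_def, div_mul_eq_mul_div, div_lt_iff₀ (by positivity)]
    nlinarith
  have hmem : ∀ p ∈ ball p₀ ε, ∀ ζ : ℂ, ‖ζ‖ ≤ r → p + ζ • v ∈ ball p₀ (2 * ε) := by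
    intro p hp ζ hζ
    have h₁ : ‖ζ • v‖ < ε := by
      rw [norm_smul]
      exact (mul_le_mul_of_nonneg_right hζ (norm_nonneg v)).trans_lt hrv
    rw [mem_ball, dist_eq_norm] at hp ⊢
    rw [add_sub_right_comm]
    linarith [norm_add_le (p - p₀) (ζ • v)]
  have hmemU : ∀ p ∈ ball p₀ ε, ∀ ζ : ℂ, ‖ζ‖ ≤ r → p + ζ • v ∈ U := fun p hp ζ hζ =>
    (hball (ball_subset_ball (by linarith) (hmem p hp ζ hζ))).1
  have hcircle : ∀ t, ‖circleMap 0 r t‖ ≤ r := fun t => by simp [abs_of_pos hr]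
  have hcauchy : ∀ p ∈ ball p₀ ε, Complex.cderiv r (fun ζ => f (p + ζ • v)) 0
      = fderiv ℂ f p v := by
    intro p hp
    have hpU : p ∈ U := by simpa using hmemU p hp 0 (by simpa using hr.le)
    have hline : ∀ ζ : ℂ, HasDerivAt (fun ζ : ℂ => p + ζ • v) v ζ := fun ζ => by
      simpa using ((hasDerivAt_id ζ).smul_const v).const_add p
    rw [Complex.cderiv_eq_deriv (U := (fun ζ : ℂ => p + ζ • v) ⁻¹' U)
      (hU.preimage (by fun_prop)) _ hr]
    · have h := (hdiff p hpU).hasFDerivAt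
      rw [show p = p + (0 : ℂ) • v by simp] at h
      exact (h.comp_hasDerivAt (0 : ℂ) (hline 0)).deriv.trans (by simp)
    · exact fun ζ hζ => hmemU p hp ζ (by simpa using hζ)
    · exact fun ζ hζ =>
        ((hdiff _ hζ).comp ζ (hline ζ).differentiableAt).differentiableWithinAt
  set c : ℝ → ℂ := fun t => circleMap 0 r t * I * (circleMap 0 r t ^ 2)⁻¹
  have hc : Continuous c := by
    have h : Continuous (circleMap 0 r) := continuous_circleMap 0 r
    refine Continuous.mul (by fun_prop) (Continuous.inv₀ (by fun_prop) fun t => ?_)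
    simpa using hr.ne'
  have hF : ∀ p ∈ ball p₀ ε, Continuous fun t => c t * f (p + circleMap 0 r t • v) := by
    intro p hp
    refine hc.mul (continuous_iff_continuousAt.2 fun t => ?_)
    exact ((hdiff _ (hmemU p hp _ (hcircle t))).continuousAt).comp
      (f := fun t => p + circleMap 0 r t • v)
      (by have := continuous_circleMap 0 r; fun_prop)
  have hderiv := intervalIntegral.hasFDerivAt_integral_of_dominated_of_fderiv_le (𝕜 := ℂ)
    (μ := MeasureTheory.volume) (a := 0) (b := 2 * Real.pi)
    (F := fun p t => c t * f (p + circleMap 0 r t • v))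
    (F' := fun p t => c t • fderiv ℂ f (p + circleMap 0 r t • v))
    (bound := fun t => ‖c t‖ * (2 / ε))
    (ball_mem_nhds p₀ hε)
    (eventually_of_mem (ball_mem_nhds p₀ hε) fun p hp => (hF p hp).aestronglyMeasurable)
    ((hF p₀ (mem_ball_self hε)).intervalIntegrable _ _)
    (by
      refine (hc.measurable.smul ((measurable_fderiv ℂ f).comp
        (Continuous.measurable ?_))).aestronglyMeasurable
      have := continuous_circleMap 0 r
      fun_prop)
    (.of_forall fun t _ p hp => by
      rw [norm_smul]
      exact mul_le_mul_of_nonneg_left (hbound _ (hmem p hp _ (hcircle t))) (norm_nonneg _))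
    ((hc.norm.mul continuous_const).intervalIntegrable _ _)
    (.of_forall fun t _ p hp => by
      have h := (hdiff _ (hmemU p hp _ (hcircle t))).hasFDerivAt
      exact (h.comp p ((hasFDerivAt_id p).add_const _)).const_mul (c t))
  refine (hderiv.differentiableAt.const_mul (2 * Real.pi * I : ℂ)⁻¹).congr_of_eventuallyEq ?_
  filter_upwards [ball_mem_nhds p₀ hε] with p hp
  rw [← hcauchy p hp]
  simp [Complex.cderiv, circleIntegral, c, mul_assoc]

theorem pdx_eq_fderiv {f : ℂ × ℂ → ℂ} {p : ℂ × ℂ} (hf : DifferentiableAt ℂ f p) :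
    pdx f p = fderiv ℂ f p (1, 0) :=
  (hf.hasFDerivAt.comp_hasDerivAt (f := fun x => (x, p.2)) p.1
    ((hasDerivAt_id p.1).prodMk (hasDerivAt_const p.1 p.2))).deriv

theorem pdy_eq_fderiv {f : ℂ × ℂ → ℂ} {p : ℂ × ℂ} (hf : DifferentiableAt ℂ f p) :
    pdy f p = fderiv ℂ f p (0, 1) :=
  (hf.hasFDerivAt.comp_hasDerivAt (f := fun y => (p.1, y)) p.2
    ((hasDerivAt_const p.2 p.1).prodMk (hasDerivAt_id p.2))).deriv

theorem pdx_const (c : ℂ) (p : ℂ × ℂ) : pdx (fun _ => c) p = 0 := by simp [pdx]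

theorem pdy_const (c : ℂ) (p : ℂ × ℂ) : pdy (fun _ => c) p = 0 := by simp [pdy]

theorem pdx_fst : pdx Prod.fst = fun _ => 1 := by ext; simp [pdx]

theorem pdy_fst : pdy Prod.fst = fun _ => 0 := by ext; simp [pdy]

theorem pdx_snd : pdx Prod.snd = fun _ => 0 := by ext; simp [pdx]

theorem pdy_snd : pdy Prod.snd = fun _ => 1 := by ext; simp [pdy]

section SecondOrder

open Filter Topology

variable {Ω Ω' : Set (ℂ × ℂ)} {f u w₁ w₂ : ℂ × ℂ → ℂ} {p : ℂ × ℂ}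

theorem pdx_congr {g : ℂ × ℂ → ℂ} (h : f =ᶠ[𝓝 p] g) : pdx f p = pdx g p :=
  EventuallyEq.deriv_eq
    (h.comp_tendsto (Continuous.tendsto' (f := fun x => (x, p.2)) (by fun_prop) p.1 p rfl))

theorem pdy_congr {g : ℂ × ℂ → ℂ} (h : f =ᶠ[𝓝 p] g) : pdy f p = pdy g p :=
  EventuallyEq.deriv_eq
    (h.comp_tendsto (Continuous.tendsto' (f := fun y => (p.1, y)) (by fun_prop) p.2 p rfl))

theorem differentiableOn_pdx (hΩ : IsOpen Ω) (hf : DifferentiableOn ℂ f Ω) :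
    DifferentiableOn ℂ (pdx f) Ω :=
  (differentiableOn_fderiv_apply_const hf hΩ (1, 0)).congr fun _ hz =>
    pdx_eq_fderiv (hf.differentiableAt (hΩ.mem_nhds hz))

theorem differentiableOn_pdy (hΩ : IsOpen Ω) (hf : DifferentiableOn ℂ f Ω) :
    DifferentiableOn ℂ (pdy f) Ω :=
  (differentiableOn_fderiv_apply_const hf hΩ (0, 1)).congr fun _ hz =>
    pdy_eq_fderiv (hf.differentiableAt (hΩ.mem_nhds hz))

theorem hasFDerivAt_of_pdx_pdy (hf : DifferentiableAt ℂ f p) :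
    HasFDerivAt f (pdx f p • ContinuousLinearMap.fst ℂ ℂ ℂ
      + pdy f p • ContinuousLinearMap.snd ℂ ℂ ℂ) p := by
  convert hf.hasFDerivAt using 1
  ext <;> simp [pdx_eq_fderiv hf, pdy_eq_fderiv hf]

theorem pdy_pdx_comm (hΩ : IsOpen Ω) (hf : DifferentiableOn ℂ f Ω) (hp : p ∈ Ω) :
    pdy (pdx f) p = pdx (pdy f) p := by
  have hx := (differentiableOn_pdx hΩ hf).differentiableAt (hΩ.mem_nhds hp)
  have hy := (differentiableOn_pdy hΩ hf).differentiableAt (hΩ.mem_nhds hp)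
  have h := second_derivative_symmetric_of_eventually
    (eventually_of_mem (hΩ.mem_nhds hp) fun z hz =>
      hasFDerivAt_of_pdx_pdy (hf.differentiableAt (hΩ.mem_nhds hz)))
    ((hx.hasFDerivAt.smul_const (ContinuousLinearMap.fst ℂ ℂ ℂ)).add
      (hy.hasFDerivAt.smul_const (ContinuousLinearMap.snd ℂ ℂ ℂ))) (0, 1) (1, 0)
  simpa [pdx_eq_fderiv hy, pdy_eq_fderiv hx] using h

theorem hasFDerivAt_comp_prodMk (hu : DifferentiableAt ℂ u (w₁ p, w₂ p))
    (hw₁ : DifferentiableAt ℂ w₁ p) (hw₂ : DifferentiableAt ℂ w₂ p) :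
    HasFDerivAt (fun z => u (w₁ z, w₂ z))
      (pdx u (w₁ p, w₂ p) • fderiv ℂ w₁ p + pdy u (w₁ p, w₂ p) • fderiv ℂ w₂ p) p :=
  (hasFDerivAt_of_pdx_pdy hu).comp (f := fun z => (w₁ z, w₂ z)) p
    (hw₁.hasFDerivAt.prodMk hw₂.hasFDerivAt)

theorem pdx_comp (hu : DifferentiableAt ℂ u (w₁ p, w₂ p))
    (hw₁ : DifferentiableAt ℂ w₁ p) (hw₂ : DifferentiableAt ℂ w₂ p) :
    pdx (fun z => u (w₁ z, w₂ z)) p =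
      pdx u (w₁ p, w₂ p) * pdx w₁ p + pdy u (w₁ p, w₂ p) * pdx w₂ p := by
  have h := hasFDerivAt_comp_prodMk hu hw₁ hw₂
  rw [pdx_eq_fderiv h.differentiableAt, h.fderiv, pdx_eq_fderiv hw₁, pdx_eq_fderiv hw₂]
  simp

theorem pdy_comp (hu : DifferentiableAt ℂ u (w₁ p, w₂ p))
    (hw₁ : DifferentiableAt ℂ w₁ p) (hw₂ : DifferentiableAt ℂ w₂ p) :
    pdy (fun z => u (w₁ z, w₂ z)) p =
      pdx u (w₁ p, w₂ p) * pdy w₁ p + pdy u (w₁ p, w₂ p) * pdy w₂ p := by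
  have h := hasFDerivAt_comp_prodMk hu hw₁ hw₂
  rw [pdy_eq_fderiv h.differentiableAt, h.fderiv, pdy_eq_fderiv hw₁, pdy_eq_fderiv hw₂]
  simp

/-- The product rule for `fg + hk`. -/
theorem pdx_mul_add_mul {f g h k : ℂ × ℂ → ℂ} (hf : DifferentiableAt ℂ f p)
    (hg : DifferentiableAt ℂ g p) (hh : DifferentiableAt ℂ h p) (hk : DifferentiableAt ℂ k p) :
    pdx (fun z => f z * g z + h z * k z) p =
      pdx f p * g p + f p * pdx g p + (pdx h p * k p + h p * pdx k p) := by
  have H := (hf.hasFDerivAt.fun_mul hg.hasFDerivAt).fun_add (hh.hasFDerivAt.fun_mul hk.hasFDerivAt)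
  rw [pdx_eq_fderiv H.differentiableAt, H.fderiv, pdx_eq_fderiv hf, pdx_eq_fderiv hg,
    pdx_eq_fderiv hh, pdx_eq_fderiv hk]
  simp
  ring

/-- The product rule for `fg + hk`. -/
theorem pdy_mul_add_mul {f g h k : ℂ × ℂ → ℂ} (hf : DifferentiableAt ℂ f p)
    (hg : DifferentiableAt ℂ g p) (hh : DifferentiableAt ℂ h p) (hk : DifferentiableAt ℂ k p) :
    pdy (fun z => f z * g z + h z * k z) p =
      pdy f p * g p + f p * pdy g p + (pdy h p * k p + h p * pdy k p) := by
  have H := (hf.hasFDerivAt.fun_mul hg.hasFDerivAt).fun_add (hh.hasFDerivAt.fun_mul hk.hasFDerivAt)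
  rw [pdy_eq_fderiv H.differentiableAt, H.fderiv, pdy_eq_fderiv hf, pdy_eq_fderiv hg,
    pdy_eq_fderiv hh, pdy_eq_fderiv hk]
  simp
  ring

/-- The chain rule for the second partial derivatives of `u ∘ (w₁, w₂)`. -/
theorem second_pd_comp (hΩ : IsOpen Ω) (hΩ' : IsOpen Ω')
    (hw₁ : DifferentiableOn ℂ w₁ Ω) (hw₂ : DifferentiableOn ℂ w₂ Ω)
    (hu : DifferentiableOn ℂ u Ω') (hmaps : ∀ z ∈ Ω, (w₁ z, w₂ z) ∈ Ω') (hp : p ∈ Ω) :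
    pdx (pdx fun z => u (w₁ z, w₂ z)) p =
        pdx u (w₁ p, w₂ p) * pdx (pdx w₁) p + pdy u (w₁ p, w₂ p) * pdx (pdx w₂) p
        + pdx (pdx u) (w₁ p, w₂ p) * pdx w₁ p ^ 2
        + 2 * pdx (pdy u) (w₁ p, w₂ p) * pdx w₁ p * pdx w₂ p
        + pdy (pdy u) (w₁ p, w₂ p) * pdx w₂ p ^ 2 ∧
    pdx (pdy fun z => u (w₁ z, w₂ z)) p =
        pdx u (w₁ p, w₂ p) * pdx (pdy w₁) p + pdy u (w₁ p, w₂ p) * pdx (pdy w₂) p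
        + pdx (pdx u) (w₁ p, w₂ p) * pdx w₁ p * pdy w₁ p
        + pdx (pdy u) (w₁ p, w₂ p) * (pdx w₁ p * pdy w₂ p + pdx w₂ p * pdy w₁ p)
        + pdy (pdy u) (w₁ p, w₂ p) * pdx w₂ p * pdy w₂ p ∧
    pdy (pdy fun z => u (w₁ z, w₂ z)) p =
        pdx u (w₁ p, w₂ p) * pdy (pdy w₁) p + pdy u (w₁ p, w₂ p) * pdy (pdy w₂) p
        + pdx (pdx u) (w₁ p, w₂ p) * pdy w₁ p ^ 2
        + 2 * pdx (pdy u) (w₁ p, w₂ p) * pdy w₁ p * pdy w₂ p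
        + pdy (pdy u) (w₁ p, w₂ p) * pdy w₂ p ^ 2 := by
  have hn := hΩ.mem_nhds hp
  have hn' := hΩ'.mem_nhds (hmaps p hp)
  have hx : (pdx fun z => u (w₁ z, w₂ z)) =ᶠ[𝓝 p] fun z =>
      pdx u (w₁ z, w₂ z) * pdx w₁ z + pdy u (w₁ z, w₂ z) * pdx w₂ z :=
    eventually_of_mem hn fun z hz => pdx_comp
      (hu.differentiableAt (hΩ'.mem_nhds (hmaps z hz)))
      (hw₁.differentiableAt (hΩ.mem_nhds hz)) (hw₂.differentiableAt (hΩ.mem_nhds hz))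
  have hy : (pdy fun z => u (w₁ z, w₂ z)) =ᶠ[𝓝 p] fun z =>
      pdx u (w₁ z, w₂ z) * pdy w₁ z + pdy u (w₁ z, w₂ z) * pdy w₂ z :=
    eventually_of_mem hn fun z hz => pdy_comp
      (hu.differentiableAt (hΩ'.mem_nhds (hmaps z hz)))
      (hw₁.differentiableAt (hΩ.mem_nhds hz)) (hw₂.differentiableAt (hΩ.mem_nhds hz))
  have dw₁ := hw₁.differentiableAt hn
  have dw₂ := hw₂.differentiableAt hn
  have dux := (differentiableOn_pdx hΩ' hu).differentiableAt hn'
  have duy := (differentiableOn_pdy hΩ' hu).differentiableAt hn'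
  have dux' := (hasFDerivAt_comp_prodMk dux dw₁ dw₂).differentiableAt
  have duy' := (hasFDerivAt_comp_prodMk duy dw₁ dw₂).differentiableAt
  have dw₁x := (differentiableOn_pdx hΩ hw₁).differentiableAt hn
  have dw₁y := (differentiableOn_pdy hΩ hw₁).differentiableAt hn
  have dw₂x := (differentiableOn_pdx hΩ hw₂).differentiableAt hn
  have dw₂y := (differentiableOn_pdy hΩ hw₂).differentiableAt hn
  have hcomm := pdy_pdx_comm hΩ' hu (hmaps p hp)
  refine ⟨?_, ?_, ?_⟩
  · rw [pdx_congr hx, pdx_mul_add_mul dux' dw₁x duy' dw₂x, pdx_comp dux dw₁ dw₂,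
      pdx_comp duy dw₁ dw₂, hcomm]
    ring
  · rw [pdx_congr hy, pdx_mul_add_mul dux' dw₁y duy' dw₂y, pdx_comp dux dw₁ dw₂,
      pdx_comp duy dw₁ dw₂, hcomm]
    ring
  · rw [pdy_congr hy, pdy_mul_add_mul dux' dw₁y duy' dw₂y, pdy_comp dux dw₁ dw₂,
      pdy_comp duy dw₁ dw₂, hcomm]
    ring

end SecondOrder

/-- Exchange of the first and second arguments: the GL(3) derivatives
of a biholomorphism are expressed through those of its inverse via `−(1/D)·M`. -/
theorem statement3 (Ω Ω' : Set (ℂ × ℂ)) (hΩ : IsOpen Ω) (hΩ' : IsOpen Ω')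
    (w₁ w₂ x y : ℂ × ℂ → ℂ)
    (hw₁ : DifferentiableOn ℂ w₁ Ω) (hw₂ : DifferentiableOn ℂ w₂ Ω)
    (hx : DifferentiableOn ℂ x Ω') (hy : DifferentiableOn ℂ y Ω')
    (hmaps : ∀ p ∈ Ω, (w₁ p, w₂ p) ∈ Ω')
    (hmaps' : ∀ q ∈ Ω', (x q, y q) ∈ Ω)
    (hleft : ∀ p ∈ Ω, (x (w₁ p, w₂ p), y (w₁ p, w₂ p)) = p)
    (hright : ∀ q ∈ Ω', (w₁ (x q, y q), w₂ (x q, y q)) = q)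
    (hJw : ∀ p ∈ Ω, Jac w₁ w₂ p ≠ 0)
    (hJxy : ∀ q ∈ Ω', Jac x y q ≠ 0) :
    ∀ p ∈ Ω,
      Vvec w₁ w₂ p =
        -((Jac w₁ w₂ p)⁻¹ • (Mmat w₁ w₂ p *ᵥ Vvec x y (w₁ p, w₂ p))) := by
  intro p hp
  have hn := hΩ.mem_nhds hp
  have hn' := hΩ'.mem_nhds (hmaps p hp)
  have hxw : (fun z => x (w₁ z, w₂ z)) =ᶠ[nhds p] Prod.fst :=
    Filter.eventually_of_mem hn fun z hz => congrArg Prod.fst (hleft z hz)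
  have hyw : (fun z => y (w₁ z, w₂ z)) =ᶠ[nhds p] Prod.snd :=
    Filter.eventually_of_mem hn fun z hz => congrArg Prod.snd (hleft z hz)
  have hpdx {f g : ℂ × ℂ → ℂ} (h : f =ᶠ[nhds p] g) : pdx f =ᶠ[nhds p] pdx g :=
    h.eventuallyEq_nhds.mono fun _ => pdx_congr
  have hpdy {f g : ℂ × ℂ → ℂ} (h : f =ᶠ[nhds p] g) : pdy f =ᶠ[nhds p] pdy g :=
    h.eventuallyEq_nhds.mono fun _ => pdy_congr
  have dw₁ := hw₁.differentiableAt hn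
  have dw₂ := hw₂.differentiableAt hn
  have dx := hx.differentiableAt hn'
  have dy := hy.differentiableAt hn'
  have e₁ := (pdx_comp dx dw₁ dw₂).symm.trans (pdx_congr hxw)
  have e₂ := (pdy_comp dx dw₁ dw₂).symm.trans (pdy_congr hxw)
  have e₃ := (pdx_comp dy dw₁ dw₂).symm.trans (pdx_congr hyw)
  have e₄ := (pdy_comp dy dw₁ dw₂).symm.trans (pdy_congr hyw)
  obtain ⟨x₁, x₂, x₃⟩ := second_pd_comp hΩ hΩ' hw₁ hw₂ hx hmaps hp
  obtain ⟨y₁, y₂, y₃⟩ := second_pd_comp hΩ hΩ' hw₁ hw₂ hy hmaps hp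
  rw [pdx_congr (hpdx hxw)] at x₁
  rw [pdx_congr (hpdy hxw)] at x₂
  rw [pdy_congr (hpdy hxw)] at x₃
  rw [pdx_congr (hpdx hyw)] at y₁
  rw [pdx_congr (hpdy hyw)] at y₂
  rw [pdy_congr (hpdy hyw)] at y₃
  simp only [pdx_fst, pdy_fst, pdx_snd, pdy_snd, pdx_const, pdy_const]
    at e₁ e₂ e₃ e₄ x₁ x₂ x₃ y₁ y₂ y₃
  have hD := hJw p hp
  unfold Vvec Mmat brX brY sqX sqY
  unfold Jac at hD ⊢
  generalize (w₁ p, w₂ p) = q at *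
  generalize pdx (pdx w₁) p = w₁xx at *
  generalize pdx (pdy w₁) p = w₁xy at *
  generalize pdy (pdy w₁) p = w₁yy at *
  generalize pdx (pdx w₂) p = w₂xx at *
  generalize pdx (pdy w₂) p = w₂xy at *
  generalize pdy (pdy w₂) p = w₂yy at *
  generalize pdx w₁ p = a at *
  generalize pdy w₁ p = b at *
  generalize pdx w₂ p = c at *
  generalize pdy w₂ p = d at *
  obtain ⟨D, hDdef⟩ : ∃ D, D = a * d - c * b := ⟨_, rfl⟩
  rw [← hDdef] at hD ⊢
  have hX₁ : pdx x q = d / D := by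
    rw [eq_div_iff hD]
    linear_combination d * e₁ - c * e₂ + pdx x q * hDdef
  have hX₂ : pdy x q = -b / D := by
    rw [eq_div_iff hD]
    linear_combination a * e₂ - b * e₁ + pdy x q * hDdef
  have hY₁ : pdx y q = -c / D := by
    rw [eq_div_iff hD]
    linear_combination d * e₃ - c * e₄ + pdx y q * hDdef
  have hY₂ : pdy y q = a / D := by
    rw [eq_div_iff hD]
    linear_combination a * e₄ - b * e₃ + pdy y q * hDdef
  have hJ : pdx x q * pdy y q - pdx y q * pdy x q = 1 / D := by
    rw [hX₁, hX₂, hY₁, hY₂]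
    field_simp
    linear_combination -hDdef
  rw [hJ]
  have second_eq : ∀ {P Q s t : ℂ}, 0 = pdx x q * s + pdy x q * t + P →
      0 = pdx y q * s + pdy y q * t + Q → s = -(a * P + b * Q) ∧ t = -(c * P + d * Q) := by
    intro P Q s t h₁ h₂
    rw [hX₁, hX₂] at h₁
    rw [hY₁, hY₂] at h₂
    field_simp at h₁ h₂
    constructor <;> apply mul_left_cancel₀ hD
    · linear_combination s * hDdef - a * h₁ - b * h₂
    · linear_combination t * hDdef - c * h₁ - d * h₂
  simp only [add_assoc (_ + _)] at x₁ x₂ x₃ y₁ y₂ y₃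
  obtain ⟨s₁, t₁⟩ := second_eq x₁ y₁
  obtain ⟨s₂, t₂⟩ := second_eq x₂ y₂
  obtain ⟨s₃, t₃⟩ := second_eq x₃ y₃
  rw [s₁, s₂, s₃, t₁, t₂, t₃, hX₁, hX₂, hY₁, hY₂]
  ext i
  fin_cases i <;>
  · simp
    field_simp
    subst hDdef
    ring
end
end

section
/- (Main Proposition 2.) Let z₁,z₂ be holomorphic functions of (w₁,w₂) on an open subset of ℂ² with Jacobian J := ∂_{w₁}z₁·∂_{w₂}z₂ − ∂_{w₁}z₂·∂_{w₂}z₁ ≠ 0, and let f̂₁,f̂₂ be holomorphic functions of (w₁,w₂). Define f₁ := f̂₁·∂_{w₁}z₁ + f̂₂·∂_{w₂}z₁ and f₂ := f̂₁·∂_{w₁}z₂ + f̂₂·∂_{w₂}z₂, and set ∂(f₁,f₂)/∂(z₁,z₂) := (∂_{w₁}f₁·∂_{w₂}f₂ − ∂_{w₁}f₂·∂_{w₂}f₁)/J. For differential operators P,Q write D(P,Q) := P(z₁)·Q(z₂) − P(z₂)·Q(z₁). Then: ∂(f₁,f₂)/∂(z₁,z₂) = (∂_{w₁}f̂₁·∂_{w₂}f̂₂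 − ∂_{w₁}f̂₂·∂_{w₂}f̂₁) − f̂₁·∂_{w₂}f̂₁·D(∂_{w₁},∂²_{w₁w₁})/J + f̂₂·∂_{w₁}f̂₂·D(∂_{w₂},∂²_{w₂w₂})/J − f̂₁·∂_{w₂}f̂₂·D(∂_{w₂},∂²_{w₁w₁})/J − (f̂₂·∂_{w₂}f̂₁ − f̂₁·∂_{w₁}f̂₁)·D(∂_{w₁},∂²_{w₁w₂})/J + f̂₂·∂_{w₁}f̂₁·D(∂_{w₁},∂²_{w₂w₂})/J + (f̂₁·∂_{w₁}f̂₂ − f̂₂·∂_{w₂}f̂₂)·D(∂_{w₂},∂²_{w₁w₂})/J + f̂₁²·D(∂²_{w₁w₁},∂²_{w₁w₂})/J − f̂₂²·D(∂²_{w₂w₂},∂²_{w₁w₂})/J + f̂₁·f̂₂·D(∂²_{w₁w₁},∂²_{w₂w₂})/J. -/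
open Complex Matrix

noncomputable section

open Metric Set Filter Topology

/-- A holomorphic function on a disc that stays within distance `M` of its value at the center
approximates its derivative by difference quotients, with an error that depends only on `M` and
the radius. -/
lemma dist_dslope_deriv_le {f : ℂ → ℂ} {c w : ℂ} {r M : ℝ} (hr : 0 < r)
    (hd : DifferentiableOn ℂ f (ball c r)) (h_maps : MapsTo f (ball c r) (closedBall (f c) M))
    (hw : w ∈ ball c r) :
    dist (dslope f c w) (deriv f c) ≤ 2 * (M / r) / r * dist w c := by
  have hbound : ∀ v ∈ ball c r, ‖dslope f c v‖ ≤ M / r := fun v hv =>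
    norm_dslope_le_div_of_mapsTo_ball hd h_maps hv
  rw [← dslope_same f c]
  refine dist_le_div_mul_dist_of_mapsTo_ball
    ((differentiableOn_dslope (ball_mem_nhds c hr)).2 hd) (fun v hv => ?_) hw
  rw [mem_closedBall, dist_eq_norm]
  linarith [norm_sub_le (dslope f c v) (dslope f c c), hbound v hv, hbound c (mem_ball_self hr)]

lemma DifferentiableAt.comp_prodMk_left {z : ℂ × ℂ → ℂ} {x y : ℂ}
    (h : DifferentiableAt ℂ z (x, y)) : DifferentiableAt ℂ (fun x => z (x, y)) x :=
  DifferentiableAt.comp x (f := fun x => (x, y)) h (by fun_prop)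

lemma DifferentiableAt.comp_prodMk_right {z : ℂ × ℂ → ℂ} {x y : ℂ}
    (h : DifferentiableAt ℂ z (x, y)) : DifferentiableAt ℂ (fun y => z (x, y)) y :=
  DifferentiableAt.comp y (f := fun y => (x, y)) h (by fun_prop)

/-- Near any point of its domain, the difference quotients in the second variable of a holomorphic
function converge to its partial derivative, uniformly in the first variable. -/
lemma exists_tendstoUniformlyOn_slope {z : ℂ × ℂ → ℂ} {Ω : Set (ℂ × ℂ)} (hΩ : IsOpen Ω)
    (hz : DifferentiableOn ℂ z Ω) {p : ℂ × ℂ} (hp : p ∈ Ω) :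
    ∃ r > 0, ball p.1 r ×ˢ ball p.2 r ⊆ Ω ∧
      TendstoUniformlyOn (fun y x => slope (fun y => z (x, y)) p.2 y) (fun x => pdy z (x, p.2))
        (𝓝[≠] p.2) (ball p.1 r) := by
  have hcont : ContinuousAt z p := (hz.differentiableAt (hΩ.mem_nhds hp)).continuousAt
  obtain ⟨r, hr, hsub⟩ := Metric.mem_nhds_iff.1
    (inter_mem (hΩ.mem_nhds hp) (hcont (ball_mem_nhds (z p) one_pos)))
  rw [← Prod.mk.eta (p := p), ← ball_prod_same] at hsub
  refine ⟨r, hr, fun q hq => (hsub hq).1, ?_⟩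
  rw [Metric.tendstoUniformlyOn_iff]
  intro ε hε
  have hsmall : ∀ᶠ y in 𝓝[≠] p.2, 2 * (2 / r) / r * dist y p.2 < ε := by
    have : Tendsto (fun y => 2 * (2 / r) / r * dist y p.2) (𝓝 p.2) (𝓝 0) := by
      have : Continuous (fun y => 2 * (2 / r) / r * dist y p.2) := by fun_prop
      simpa using this.tendsto p.2
    exact (this.eventually_lt_const hε).filter_mono nhdsWithin_le_nhds
  filter_upwards [hsmall, nhdsWithin_le_nhds (ball_mem_nhds p.2 hr), self_mem_nhdsWithin]
    with y hy hyr hne x hx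
  rw [dist_comm, ← dslope_of_ne _ hne]
  refine (dist_dslope_deriv_le (f := fun y => z (x, y)) hr (fun v hv => ?_) (fun v hv => ?_)
    hyr).trans_lt hy
  · exact ((hz.differentiableAt (hΩ.mem_nhds (hsub (mk_mem_prod hx hv)).1)).comp_prodMk_right
      ).differentiableWithinAt
  · have h1 : dist (z (x, v)) (z p) < 1 := (hsub (mk_mem_prod hx hv)).2
    have h2 : dist (z (x, p.2)) (z p) < 1 := (hsub (mk_mem_prod hx (mem_ball_self hr))).2
    rw [mem_closedBall]
    linarith [dist_triangle_right (z (x, v)) (z (x, p.2)) (z p)]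

section

variable {z : ℂ × ℂ → ℂ} {Ω : Set (ℂ × ℂ)} (hΩ : IsOpen Ω) (hz : DifferentiableOn ℂ z Ω)
  {p : ℂ × ℂ} (hp : p ∈ Ω)

include hΩ hz hp

lemma differentiableAt_pdx_left : DifferentiableAt ℂ (fun x => pdx z (x, p.2)) p.1 := by
  have hU : IsOpen {x | (x, p.2) ∈ Ω} := hΩ.preimage (by fun_prop)
  have hd : DifferentiableOn ℂ (fun x => z (x, p.2)) {x | (x, p.2) ∈ Ω} := fun x hx =>
    (hz.differentiableAt (hΩ.mem_nhds hx)).comp_prodMk_left.differentiableWithinAt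
  exact (hd.deriv hU).differentiableAt (hU.mem_nhds hp)

lemma differentiableAt_pdy_right : DifferentiableAt ℂ (fun y => pdy z (p.1, y)) p.2 := by
  have hU : IsOpen {y | (p.1, y) ∈ Ω} := hΩ.preimage (by fun_prop)
  have hd : DifferentiableOn ℂ (fun y => z (p.1, y)) {y | (p.1, y) ∈ Ω} := fun y hy =>
    (hz.differentiableAt (hΩ.mem_nhds hy)).comp_prodMk_right.differentiableWithinAt
  exact (hd.deriv hU).differentiableAt (hU.mem_nhds hp)

lemma differentiableAt_pdy_left_and_hasDerivAt_pdx_right :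
    DifferentiableAt ℂ (fun x => pdy z (x, p.2)) p.1 ∧
      HasDerivAt (fun y => pdx z (p.1, y)) (pdx (pdy z) p) p.2 := by
  obtain ⟨r, hr, hsub, hlim⟩ := exists_tendstoUniformlyOn_slope hΩ hz hp
  have hdiff : ∀ y ∈ ball p.2 r, ∀ x ∈ ball p.1 r, DifferentiableAt ℂ (fun x => z (x, y)) x :=
    fun y hy x hx =>
      (hz.differentiableAt (hΩ.mem_nhds (hsub (mk_mem_prod hx hy)))).comp_prodMk_left
  have hF : ∀ᶠ y in 𝓝[≠] p.2,
      DifferentiableOn ℂ (fun x => slope (fun y => z (x, y)) p.2 y) (ball p.1 r) := by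
    filter_upwards [nhdsWithin_le_nhds (ball_mem_nhds p.2 hr)] with y hy x hx
    simp only [slope_def_module]
    exact (((hdiff y hy x hx).fun_sub (hdiff p.2 (mem_ball_self hr) x hx)).fun_const_smul
      (y - p.2)⁻¹).differentiableWithinAt
  have hloc := hlim.tendstoLocallyUniformlyOn
  refine ⟨(hloc.differentiableOn hF isOpen_ball).differentiableAt (ball_mem_nhds _ hr), ?_⟩
  rw [hasDerivAt_iff_tendsto_slope]
  refine ((hloc.deriv hF isOpen_ball).tendsto_at (mem_ball_self hr)).congr' ?_
  filter_upwards [nhdsWithin_le_nhds (ball_mem_nhds p.2 hr)] with y hy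
  have h1 := hdiff y hy p.1 (mem_ball_self hr)
  have h2 := hdiff p.2 (mem_ball_self hr) p.1 (mem_ball_self hr)
  simp only [Function.comp_apply, slope_def_module, pdx]
  exact ((h1.hasDerivAt.fun_sub h2.hasDerivAt).fun_const_smul (y - p.2)⁻¹).deriv

lemma differentiableAt_pdy_left : DifferentiableAt ℂ (fun x => pdy z (x, p.2)) p.1 :=
  (differentiableAt_pdy_left_and_hasDerivAt_pdx_right hΩ hz hp).1

lemma hasDerivAt_pdx_right : HasDerivAt (fun y => pdx z (p.1, y)) (pdx (pdy z) p) p.2 :=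
  (differentiableAt_pdy_left_and_hasDerivAt_pdx_right hΩ hz hp).2

variable {g h : ℂ × ℂ → ℂ} (hg : DifferentiableAt ℂ g p) (hh : DifferentiableAt ℂ h p)

include hg hh

/-- The first partial derivative of `g ∂ₓz + h ∂ᵧz`. -/
lemma pdx_mul_pdx_add_mul_pdy :
    pdx (fun q => g q * pdx z q + h q * pdy z q) p =
      (pdx g p * pdx z p + g p * pdx (pdx z) p) + (pdx h p * pdy z p + h p * pdx (pdy z) p) :=
  ((hg.comp_prodMk_left.hasDerivAt.mul (differentiableAt_pdx_left hΩ hz hp).hasDerivAt).add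
    (hh.comp_prodMk_left.hasDerivAt.mul (differentiableAt_pdy_left hΩ hz hp).hasDerivAt)).deriv

/-- The second partial derivative of `g ∂ₓz + h ∂ᵧz`. -/
lemma pdy_mul_pdx_add_mul_pdy :
    pdy (fun q => g q * pdx z q + h q * pdy z q) p =
      (pdy g p * pdx z p + g p * pdx (pdy z) p) + (pdy h p * pdy z p + h p * pdy (pdy z) p) :=
  ((hg.comp_prodMk_right.hasDerivAt.mul (hasDerivAt_pdx_right hΩ hz hp)).add
    (hh.comp_prodMk_right.hasDerivAt.mul (differentiableAt_pdy_right hΩ hz hp).hasDerivAt)).deriv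

end

/-- **Main Proposition 2.** The deformation of the Jacobian
`∂(f₁,f₂)/∂(z₁,z₂)` expressed through the hatted functions and the second derivative
determinants of `(z₁,z₂)`. Here the two independent complex variables are `(w₁,w₂)`,
`pdx`/`pdy` denote `∂_{w₁}`/`∂_{w₂}`, and `D(P,Q) = P(z₁)Q(z₂) − P(z₂)Q(z₁)`. -/
theorem statement8 (Ω : Set (ℂ × ℂ)) (hΩ : IsOpen Ω)
    (z₁ z₂ fh₁ fh₂ : ℂ × ℂ → ℂ)
    (hz₁ : DifferentiableOn ℂ z₁ Ω) (hz₂ : DifferentiableOn ℂ z₂ Ω)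
    (hfh₁ : DifferentiableOn ℂ fh₁ Ω) (hfh₂ : DifferentiableOn ℂ fh₂ Ω)
    (hJ : ∀ p ∈ Ω, Jac z₁ z₂ p ≠ 0)
    (f₁ f₂ : ℂ × ℂ → ℂ)
    (hf₁ : f₁ = fun p => fh₁ p * pdx z₁ p + fh₂ p * pdy z₁ p)
    (hf₂ : f₂ = fun p => fh₁ p * pdx z₂ p + fh₂ p * pdy z₂ p) :
    ∀ p ∈ Ω,
      (pdx f₁ p * pdy f₂ p - pdx f₂ p * pdy f₁ p) / Jac z₁ z₂ p =
        (pdx fh₁ p * pdy fh₂ p - pdx fh₂ p * pdy fh₁ p)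
        - fh₁ p * pdy fh₁ p *
            ((pdx z₁ p * pdx (pdx z₂) p - pdx z₂ p * pdx (pdx z₁) p) / Jac z₁ z₂ p)
        + fh₂ p * pdx fh₂ p *
            ((pdy z₁ p * pdy (pdy z₂) p - pdy z₂ p * pdy (pdy z₁) p) / Jac z₁ z₂ p)
        - fh₁ p * pdy fh₂ p *
            ((pdy z₁ p * pdx (pdx z₂) p - pdy z₂ p * pdx (pdx z₁) p) / Jac z₁ z₂ p)
        - (fh₂ p * pdy fh₁ p - fh₁ p * pdx fh₁ p) *
            ((pdx z₁ p * pdx (pdy z₂) p - pdx z₂ p * pdx (pdy z₁) p) / Jac z₁ z₂ p)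
        + fh₂ p * pdx fh₁ p *
            ((pdx z₁ p * pdy (pdy z₂) p - pdx z₂ p * pdy (pdy z₁) p) / Jac z₁ z₂ p)
        + (fh₁ p * pdx fh₂ p - fh₂ p * pdy fh₂ p) *
            ((pdy z₁ p * pdx (pdy z₂) p - pdy z₂ p * pdx (pdy z₁) p) / Jac z₁ z₂ p)
        + (fh₁ p) ^ 2 *
            ((pdx (pdx z₁) p * pdx (pdy z₂) p - pdx (pdx z₂) p * pdx (pdy z₁) p) /
              Jac z₁ z₂ p)
        - (fh₂ p) ^ 2 *
            ((pdy (pdy z₁) p * pdx (pdy z₂) p - pdy (pdy z₂) p * pdx (pdy z₁) p) /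
              Jac z₁ z₂ p)
        + fh₁ p * fh₂ p *
            ((pdx (pdx z₁) p * pdy (pdy z₂) p - pdx (pdx z₂) p * pdy (pdy z₁) p) /
              Jac z₁ z₂ p) := by
  intro p hp
  have hg := hfh₁.differentiableAt (hΩ.mem_nhds hp)
  have hh := hfh₂.differentiableAt (hΩ.mem_nhds hp)
  have hJp := hJ p hp
  rw [hf₁, hf₂, pdx_mul_pdx_add_mul_pdy hΩ hz₁ hp hg hh, pdx_mul_pdx_add_mul_pdy hΩ hz₂ hp hg hh,
    pdy_mul_pdx_add_mul_pdy hΩ hz₁ hp hg hh, pdy_mul_pdx_add_mul_pdy hΩ hz₂ hp hg hh]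
  field_simp
  rw [Jac]
  ring
end
end
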